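/- arXiv:1905.12412 — 9 statements merged into one kernel-verified Lean document; each statement's English description precedes it below -/
import Mathlib

section
/- Let E be a real inner product space and let f : E → ℝ be convex and differentiable with L-Lipschitz continuous gradient for some L > 0 (i.e. ‖∇f(x) − ∇f(y)‖ ≤ L‖x − y‖ for all x, y ∈ E). Then for all x, z ∈ E: (1/(2L))·‖∇f(x) − ∇f(z)‖² ≤ f(x) − f(z) − ⟪∇f(z), x − z⟫. -/
open RealInnerProductSpace

/-!
The gap `f x - f z - ⟪∇f z, x - z⟫` is bounded below by comparing two estimates of `f` at the
point `w = x - L⁻¹ (∇f x - ∇f z)`, which is one gradient step from `x` for the convex function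
`f - ⟪∇f z, ·⟫`, whose minimizer is `z`. Convexity bounds `f w` from below by the tangent plane
at `z` (`tangent_le`), and the Lipschitz gradient bounds it from above by the quadratic model at
`x` (`descent`). Both estimates are one-variable facts about `t ↦ f (x + t • v)`.
-/

lemma hasDerivAt_line {E : Type*} [NormedAddCommGroup E] [InnerProductSpace ℝ E]
    [CompleteSpace E] {f : E → ℝ} {f' : E → E} (hdiff : ∀ x, HasGradientAt f (f' x) x)
    (x v : E) (t : ℝ) :
    HasDerivAt (fun s : ℝ => f (x + s • v)) ⟪f' (x + t • v), v⟫ t := by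
  have h1 : HasDerivAt (fun s : ℝ => x + s • v) v t := by
    simpa using ((hasDerivAt_id t).smul_const v).const_add x
  exact (hdiff (x + t • v)).hasFDerivAt.comp_hasDerivAt t h1

lemma tangent_le {E : Type*} [NormedAddCommGroup E] [InnerProductSpace ℝ E]
    [CompleteSpace E] {f : E → ℝ} {f' : E → E} (hconv : ConvexOn ℝ Set.univ f)
    (hdiff : ∀ x, HasGradientAt f (f' x) x) (z v : E) :
    f z + ⟪f' z, v⟫ ≤ f (z + v) := by
  have hc : ConvexOn ℝ Set.univ (fun s : ℝ => f (z + s • v)) := by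
    refine ⟨convex_univ, fun a _ b _ p q hp hq hpq => ?_⟩
    have key := hconv.2 (Set.mem_univ (z + a • v)) (Set.mem_univ (z + b • v)) hp hq hpq
    have e : z + (p • a + q • b) • v = p • (z + a • v) + q • (z + b • v) := by
      obtain rfl : q = 1 - p := by linarith
      simp only [smul_eq_mul]
      module
    simpa only [e] using key
  have h := hc.le_slope_of_hasDerivAt (Set.mem_univ 0) (Set.mem_univ 1) one_pos
    (hasDerivAt_line hdiff z v 0)
  simp [slope_def_field] at h
  linarith

/-- The quadratic upper bound for a function with `L`-Lipschitz gradient. -/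
lemma descent {E : Type*} [NormedAddCommGroup E] [InnerProductSpace ℝ E]
    [CompleteSpace E] {f : E → ℝ} {f' : E → E} {L : ℝ}
    (hdiff : ∀ x, HasGradientAt f (f' x) x)
    (hlip : ∀ x y, ‖f' x - f' y‖ ≤ L * ‖x - y‖) (x v : E) :
    f (x + v) ≤ f x + ⟪f' x, v⟫ + L / 2 * ‖v‖ ^ 2 := by
  -- The difference between `f` and its quadratic model is antitone along the segment.
  have hd : ∀ t : ℝ, HasDerivAt
      (fun s : ℝ => f (x + s • v) - (s * ⟪f' x, v⟫ + s ^ 2 * (L / 2 * ‖v‖ ^ 2)))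
      (⟪f' (x + t • v), v⟫ - (⟪f' x, v⟫ + 2 * t * (L / 2 * ‖v‖ ^ 2))) t := by
    intro t
    refine (hasDerivAt_line hdiff x v t).sub (HasDerivAt.add ?_ ?_)
    · simpa using (hasDerivAt_id t).mul_const ⟪f' x, v⟫
    · simpa using (hasDerivAt_pow 2 t).mul_const (L / 2 * ‖v‖ ^ 2)
  have hanti := antitoneOn_of_deriv_nonpos (convex_Icc (0 : ℝ) 1)
    (fun t _ => (hd t).continuousAt.continuousWithinAt)
    (fun t _ => (hd t).differentiableAt.differentiableWithinAt)
    (fun t ht => by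
      rw [interior_Icc] at ht
      rw [(hd t).deriv]
      have h1 : ⟪f' (x + t • v) - f' x, v⟫ ≤ ‖f' (x + t • v) - f' x‖ * ‖v‖ :=
        real_inner_le_norm _ _
      have h2 := hlip (x + t • v) x
      rw [add_sub_cancel_left, norm_smul, Real.norm_of_nonneg ht.1.le] at h2
      have h3 := mul_le_mul_of_nonneg_right h2 (norm_nonneg v)
      rw [inner_sub_left] at h1
      linarith)
  have h := hanti (Set.left_mem_Icc.2 zero_le_one) (Set.right_mem_Icc.2 zero_le_one) zero_le_one
  simp at h
  linarith

/-- Lemma `smoothfunction_prop`: for a convex differentiable `f : E → ℝ` whose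
gradient is `L`-Lipschitz, `(1/(2L))·‖∇f x − ∇f z‖² ≤ f x − f z − ⟪∇f z, x − z⟫`. -/
theorem stmt0 {E : Type*} [NormedAddCommGroup E] [InnerProductSpace ℝ E] [CompleteSpace E]
    (f : E → ℝ) (f' : E → E) (L : ℝ) (hL : 0 < L)
    (hconv : ConvexOn ℝ Set.univ f)
    (hdiff : ∀ x, HasGradientAt f (f' x) x)
    (hlip : ∀ x y, ‖f' x - f' y‖ ≤ L * ‖x - y‖)
    (x z : E) :
    1 / (2 * L) * ‖f' x - f' z‖ ^ 2 ≤ f x - f z - ⟪f' z, x - z⟫ := by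
  set d := f' x - f' z with hd
  have hup := descent hdiff hlip x (-(L⁻¹ • d))
  have hlow := tangent_le hconv hdiff z ((x - z) + -(L⁻¹ • d))
  have e : z + ((x - z) + -(L⁻¹ • d)) = x + -(L⁻¹ • d) := by abel
  have hsq : ⟪f' x, d⟫ - ⟪f' z, d⟫ = ‖d‖ ^ 2 := by
    rw [← inner_sub_left, ← hd, real_inner_self_eq_norm_sq]
  rw [e, inner_add_right, inner_neg_right, inner_smul_right] at hlow
  rw [inner_neg_right, inner_smul_right, norm_neg, norm_smul, mul_pow,
    Real.norm_of_nonneg (inv_nonneg.2 hL.le)] at hup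
  have h1 : L / 2 * (L⁻¹ ^ 2 * ‖d‖ ^ 2) = 1 / (2 * L) * ‖d‖ ^ 2 := by field_simp
  have h2 : L⁻¹ * ⟪f' x, d⟫ - L⁻¹ * ⟪f' z, d⟫ = 2 * (1 / (2 * L) * ‖d‖ ^ 2) := by
    rw [← mul_sub, hsq]
    field_simp
  linarith
end

section
/- Fix u, x̃ ∈ E and for each i ∈ {1,…,m} define δ_i := (1/(m·q_i))·(∇f_i(u) − ∇f_i(x̃)) + ∇f(x̃) − ∇f(u). Then ∑_{i=1}^m q_i·δ_i = 0 and ∑_{i=1}^m q_i·‖δ_i‖² ≤ 2·L_Q·[f(x̃) − f(u) − ⟪∇f(u), x̃ − u⟫]. (That is, the SVRG gradient estimator G = (1/(m·q_i))(∇f_i(u) − ∇f_i(x̃)) + ∇f(x̃), with i drawn with probabilities q_i, is an unbiased estimator of ∇f(u) whose variance is bounded by 2·L_Q times the Bregman gap of f between x̃ and u.) -/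
open RealInnerProductSpace Finset

/-!
The bound rests on the co-coercivity of a convex function `f` with `L`-Lipschitz gradient:
`‖∇f(u) − ∇f(x)‖² ≤ 2 L (f(x) − f(u) − ⟪∇f(u), x − u⟫)`
(`sq_norm_gradient_sub_le`). It follows by evaluating `f` at the gradient step
`w = x − (∇f(x) − ∇f(u)) / L`: convexity bounds `f w` below by the tangent plane at `u`, while the
descent lemma bounds it above by the quadratic model at `x`.

The estimator error `δ_i` is the vector `(m q_i)⁻¹ (∇f_i(u) − ∇f_i(x̃))` minus its `q`-mean, so
`∑ q_i ‖δ_i‖²` is at most the second moment `∑ ‖∇f_i(u) − ∇f_i(x̃)‖² / (m² q_i)`. Co-coercivity of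
each `f_i` together with `L_i / (m q_i) ≤ L_Q` turns this into the Bregman gap of the average.
-/

section Gradient

variable {E : Type*} [NormedAddCommGroup E] [InnerProductSpace ℝ E] [CompleteSpace E]

lemma hasDerivAt_comp_line {f : E → ℝ} {f' : E → E} (hdiff : ∀ x, HasGradientAt f (f' x) x)
    (x d : E) (t : ℝ) :
    HasDerivAt (fun s : ℝ => f (x + s • d)) ⟪f' (x + t • d), d⟫ t := by
  have hl : HasDerivAt (fun s : ℝ => x + s • d) d t := by
    simpa using ((hasDerivAt_id t).smul_const d).const_add x
  have := (hdiff (x + t • d)).hasFDerivAt.comp_hasDerivAt t hl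
  simpa [Function.comp_def] using this

/-- A differentiable convex function lies above its tangent planes. -/
lemma tangent_le_of_convexOn {f : E → ℝ} {f' : E → E} (hconv : ConvexOn ℝ Set.univ f)
    (hdiff : ∀ x, HasGradientAt f (f' x) x) (x y : E) :
    f x + ⟪f' x, y - x⟫ ≤ f y := by
  have hc : ConvexOn ℝ Set.univ (fun s : ℝ => f (x + s • (y - x))) := by
    have := hconv.comp_affineMap (AffineMap.lineMap x y : ℝ →ᵃ[ℝ] E)
    simpa [Function.comp_def, AffineMap.lineMap_apply, add_comm] using this
  have hd := hasDerivAt_comp_line hdiff x (y - x) 0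
  have := hc.le_slope_of_hasDerivAt (Set.mem_univ 0) (Set.mem_univ 1) one_pos hd
  simp [slope_def_field] at this
  linarith

/-- The descent lemma: a function with `L`-Lipschitz gradient lies below its quadratic model. -/
lemma le_quadratic_of_lipschitz_gradient {f : E → ℝ} {f' : E → E} {L : ℝ}
    (hdiff : ∀ x, HasGradientAt f (f' x) x)
    (hlip : ∀ x y, ‖f' x - f' y‖ ≤ L * ‖x - y‖) (x d : E) :
    f (x + d) ≤ f x + ⟪f' x, d⟫ + L / 2 * ‖d‖ ^ 2 := by
  -- Along the segment, `f` minus its quadratic model has nonpositive derivative.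
  have hg : ∀ t : ℝ, HasDerivAt
      (fun s : ℝ => f (x + s • d) - s * ⟪f' x, d⟫ - s ^ 2 * (L / 2 * ‖d‖ ^ 2))
      (⟪f' (x + t • d), d⟫ - ⟪f' x, d⟫ - 2 * t * (L / 2 * ‖d‖ ^ 2)) t := by
    intro t
    have h1 := (hasDerivAt_id t).mul_const ⟪f' x, d⟫
    have h2 := (hasDerivAt_pow 2 t).mul_const (L / 2 * ‖d‖ ^ 2)
    refine (((hasDerivAt_comp_line hdiff x d t).sub h1).sub h2).congr_deriv ?_
    norm_num
  have hanti : AntitoneOn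
      (fun s : ℝ => f (x + s • d) - s * ⟪f' x, d⟫ - s ^ 2 * (L / 2 * ‖d‖ ^ 2))
      (Set.Icc 0 1) := by
    refine antitoneOn_of_hasDerivWithinAt_nonpos (convex_Icc 0 1)
      (fun t _ => (hg t).continuousAt.continuousWithinAt)
      (fun t _ => (hg t).hasDerivWithinAt) ?_
    intro t ht
    rw [interior_Icc] at ht
    have h1 := real_inner_le_norm (f' (x + t • d) - f' x) d
    have h2 := hlip (x + t • d) x
    rw [add_sub_cancel_left, norm_smul, Real.norm_of_nonneg ht.1.le] at h2
    rw [inner_sub_left] at h1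
    have h3 := mul_le_mul_of_nonneg_right h2 (norm_nonneg d)
    nlinarith
  have := hanti (Set.left_mem_Icc.2 zero_le_one) (Set.right_mem_Icc.2 zero_le_one) zero_le_one
  simp at this
  linarith

/-- Co-coercivity: the squared gradient difference is controlled by the Bregman gap. -/
lemma sq_norm_gradient_sub_le {f : E → ℝ} {f' : E → E} {L : ℝ} (hL : 0 < L)
    (hconv : ConvexOn ℝ Set.univ f) (hdiff : ∀ x, HasGradientAt f (f' x) x)
    (hlip : ∀ x y, ‖f' x - f' y‖ ≤ L * ‖x - y‖) (u x : E) :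
    ‖f' u - f' x‖ ^ 2 ≤ 2 * L * (f x - f u - ⟪f' u, x - u⟫) := by
  -- The step `-(f' x - f' u) / L` minimizes the quadratic model of `f - ⟪f' u, ·⟫` at `x`.
  have h1 := le_quadratic_of_lipschitz_gradient hdiff hlip x (L⁻¹ • (f' u - f' x))
  have h2 := tangent_le_of_convexOn hconv hdiff u (x + L⁻¹ • (f' u - f' x))
  have h3 : ‖f' u - f' x‖ ^ 2 = ⟪f' u, f' u - f' x⟫ - ⟪f' x, f' u - f' x⟫ := by
    rw [← inner_sub_left, real_inner_self_eq_norm_sq]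
  rw [add_sub_right_comm, inner_add_right, real_inner_smul_right] at h2
  rw [real_inner_smul_right, norm_smul, Real.norm_of_nonneg (inv_pos.2 hL).le] at h1
  have h4 : L⁻¹ * ‖f' u - f' x‖ ^ 2 - L / 2 * (L⁻¹ * ‖f' u - f' x‖) ^ 2
      ≤ f x - f u - ⟪f' u, x - u⟫ := by
    have h : L⁻¹ * ‖f' u - f' x‖ ^ 2
        = L⁻¹ * ⟪f' u, f' u - f' x⟫ - L⁻¹ * ⟪f' x, f' u - f' x⟫ := by rw [h3, mul_sub]
    linarith
  have h5 : L⁻¹ * ‖f' u - f' x‖ ^ 2 - L / 2 * (L⁻¹ * ‖f' u - f' x‖) ^ 2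
      = ‖f' u - f' x‖ ^ 2 / (2 * L) := by
    field_simp
    ring
  rw [h5, div_le_iff₀ (by positivity)] at h4
  linarith

end Gradient

/-- Lemma `variance_reduced_betterEsti`: the SVRG estimator is unbiased and its
variance is bounded by `2·L_Q` times the Bregman gap of `F` between `x̃` and `u`. -/
theorem stmt4 {E : Type*} [NormedAddCommGroup E] [InnerProductSpace ℝ E] [CompleteSpace E]
    (m : ℕ) (hm : 0 < m)
    (f : Fin m → E → ℝ) (f' : Fin m → E → E) (Li : Fin m → ℝ) (q : Fin m → ℝ)
    (hLipos : ∀ i, 0 < Li i)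
    (hconv : ∀ i, ConvexOn ℝ Set.univ (f i))
    (hdiff : ∀ i x, HasGradientAt (f i) (f' i x) x)
    (hlip : ∀ i x y, ‖f' i x - f' i y‖ ≤ Li i * ‖x - y‖)
    (hq : ∀ i, 0 < q i) (hqsum : ∑ i, q i = 1)
    (F : E → ℝ) (F' : E → E)
    (hF : ∀ x, F x = (1 / (m : ℝ)) * ∑ i, f i x)
    (hF' : ∀ x, F' x = (1 / (m : ℝ)) • ∑ i, f' i x)
    (LQ : ℝ)
    (hLQ : LQ = (1 / (m : ℝ)) *
      Finset.univ.sup' ⟨⟨0, hm⟩, Finset.mem_univ _⟩ (fun i => Li i / q i))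
    (u xtil : E)
    (δ : Fin m → E)
    (hδ : ∀ i, δ i = (1 / ((m : ℝ) * q i)) • (f' i u - f' i xtil) + F' xtil - F' u) :
    ∑ i, q i • δ i = 0 ∧
      ∑ i, q i * ‖δ i‖ ^ 2 ≤ 2 * LQ * (F xtil - F u - ⟪F' u, xtil - u⟫) := by
  have hm0 : (0 : ℝ) < m := Nat.cast_pos.2 hm
  have hmean : ∑ i, q i • δ i = 0 := by
    have h : ∀ i, q i • δ i
        = (1 / (m : ℝ)) • (f' i u - f' i xtil) + q i • (F' xtil - F' u) := by
      intro i
      have := (hq i).ne'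
      rw [hδ i, add_sub_assoc, smul_add, smul_smul]
      congr 2
      field_simp
    rw [Finset.sum_congr rfl fun i _ => h i, Finset.sum_add_distrib, ← Finset.sum_smul, hqsum,
      one_smul, ← Finset.smul_sum, Finset.sum_sub_distrib, smul_sub, ← hF', ← hF']
    abel
  refine ⟨hmean, ?_⟩
  -- The variance is the second moment minus the squared norm of the mean `F' u - F' xtil`.
  have hvar : ∑ i, q i * ‖δ i‖ ^ 2
      = ∑ i, q i * ‖(1 / ((m : ℝ) * q i)) • (f' i u - f' i xtil)‖ ^ 2
        - ‖F' u - F' xtil‖ ^ 2 := by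
    have h : ∀ i, q i * ‖(1 / ((m : ℝ) * q i)) • (f' i u - f' i xtil)‖ ^ 2
        = q i * ‖δ i‖ ^ 2 + 2 * ⟪q i • δ i, F' u - F' xtil⟫
          + q i * ‖F' u - F' xtil‖ ^ 2 := by
      intro i
      have : (1 / ((m : ℝ) * q i)) • (f' i u - f' i xtil) = δ i + (F' u - F' xtil) := by
        rw [hδ i]; abel
      rw [this, norm_add_sq_real, real_inner_smul_left]
      ring
    rw [Finset.sum_congr rfl fun i _ => h i, Finset.sum_add_distrib, Finset.sum_add_distrib,
      ← Finset.mul_sum, ← sum_inner, hmean, inner_zero_left, ← Finset.sum_mul, hqsum]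
    ring
  have hterm : ∀ i, q i * ‖(1 / ((m : ℝ) * q i)) • (f' i u - f' i xtil)‖ ^ 2
      ≤ 2 * LQ * ((1 / (m : ℝ)) * (f i xtil - f i u - ⟪f' i u, xtil - u⟫)) := by
    intro i
    have hqi := hq i
    have hco := sq_norm_gradient_sub_le (hLipos i) (hconv i) (hdiff i) (hlip i) u xtil
    have hgap : 0 ≤ f i xtil - f i u - ⟪f' i u, xtil - u⟫ := by
      linarith [tangent_le_of_convexOn (hconv i) (hdiff i) u xtil]
    have hLi : (1 / (m : ℝ)) * (Li i / q i) ≤ LQ := by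
      rw [hLQ]
      gcongr
      exact Finset.le_sup' (fun i => Li i / q i) (Finset.mem_univ i)
    calc q i * ‖(1 / ((m : ℝ) * q i)) • (f' i u - f' i xtil)‖ ^ 2
        = 1 / ((m : ℝ) ^ 2 * q i) * ‖f' i u - f' i xtil‖ ^ 2 := by
          rw [norm_smul, Real.norm_of_nonneg (by positivity)]
          field_simp
      _ ≤ 1 / ((m : ℝ) ^ 2 * q i)
          * (2 * Li i * (f i xtil - f i u - ⟪f' i u, xtil - u⟫)) := by gcongr
      _ = 2 * ((1 / (m : ℝ)) * (Li i / q i))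
          * ((1 / (m : ℝ)) * (f i xtil - f i u - ⟪f' i u, xtil - u⟫)) := by
          field_simp
      _ ≤ _ := by gcongr
  calc ∑ i, q i * ‖δ i‖ ^ 2
      ≤ ∑ i, q i * ‖(1 / ((m : ℝ) * q i)) • (f' i u - f' i xtil)‖ ^ 2 := by
        rw [hvar]; linarith [sq_nonneg ‖F' u - F' xtil‖]
    _ ≤ ∑ i, 2 * LQ * ((1 / (m : ℝ)) * (f i xtil - f i u - ⟪f' i u, xtil - u⟫)) :=
        Finset.sum_le_sum fun i _ => hterm i
    _ = 2 * LQ * (F xtil - F u - ⟪F' u, xtil - u⟫) := by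
        rw [← Finset.mul_sum, ← Finset.mul_sum, Finset.sum_sub_distrib, Finset.sum_sub_distrib,
          ← sum_inner, hF, hF, hF', real_inner_smul_left]
        ring
end

section
/- Let E be a real inner product space, X ⊆ E a convex set, w : E → ℝ convex and differentiable, and define V(a,b) := w(b) − w(a) − ⟪∇w(a), b − a⟫. Let p : E → ℝ be convex, let x̃, ỹ ∈ X, let µ₁, µ₂ ≥ 0, and suppose u* ∈ X minimizes u ↦ p(u) + µ₁·V(x̃,u) + µ₂·V(ỹ,u) over X. Then for every u ∈ X: p(u*) + µ₁·V(x̃,u*) + µ₂·V(ỹ,u*) ≤ p(u) + µ₁·V(x̃,u) + µ₂·V(ỹ,u) − (µ₁ + µ₂)·V(u*,u). -/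
open RealInnerProductSpace

/-!
The function `p` is only convex, so it is linearized along the segment from `u*` to `u`: for
`t ∈ [0, 1]`, convexity gives `p (u* + t (u - u*)) - p u* ≤ t (p u - p u*)`. Replacing the `p`-part
of the objective increment by this bound yields a function `g` of `t` which vanishes at `0`, is
nonnegative on `[0, 1]` by minimality of `u*`, and is differentiable at `0` because `w` is. Hence
`g' 0 ≥ 0`, and since `V` is the remainder of `w` after its first-order expansion, `g' 0 ≥ 0` is the
claimed inequality after rearrangement.
-/

/-- First-order necessary condition at the left endpoint of an interval. -/
theorem deriv_nonneg_of_nonneg_right {g : ℝ → ℝ} {g' : ℝ} (hg : HasDerivAt g g' 0)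
    (h0 : g 0 = 0) (hpos : ∀ t, 0 < t → t ≤ 1 → 0 ≤ g t) : 0 ≤ g' := by
  have ht : Filter.Tendsto (slope g 0) (nhdsWithin 0 (Set.Ioi 0)) (nhds g') :=
    (hasDerivAt_iff_tendsto_slope.1 hg).mono_left
      (nhdsWithin_mono _ fun t ht => ne_of_gt ht)
  refine ge_of_tendsto ht ?_
  filter_upwards [Ioc_mem_nhdsGT (zero_lt_one : (0 : ℝ) < 1)] with t ht
  rw [slope_def_field, h0, sub_zero, sub_zero]
  exact div_nonneg (hpos t ht.1 ht.2) ht.1.le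

/-- Lemma `tech1_prox` (three-point lemma for Bregman prox-mappings):
if `u*` minimizes `p(u) + µ₁·V(x̃,u) + µ₂·V(ỹ,u)` over the convex set `X`, then for all
`u ∈ X`, `p(u*) + µ₁V(x̃,u*) + µ₂V(ỹ,u*) ≤ p(u) + µ₁V(x̃,u) + µ₂V(ỹ,u) − (µ₁+µ₂)V(u*,u)`. -/
theorem stmt5 {E : Type*} [NormedAddCommGroup E] [InnerProductSpace ℝ E] [CompleteSpace E]
    (X : Set E) (hX : Convex ℝ X)
    (w : E → ℝ) (w' : E → E)
    (hwconv : ConvexOn ℝ Set.univ w)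
    (hw : ∀ x, HasGradientAt w (w' x) x)
    (V : E → E → ℝ) (hV : ∀ a b, V a b = w b - w a - ⟪w' a, b - a⟫)
    (p : E → ℝ) (hp : ConvexOn ℝ Set.univ p)
    (xtil ytil : E) (hxtil : xtil ∈ X) (hytil : ytil ∈ X)
    (μ₁ μ₂ : ℝ) (hμ₁ : 0 ≤ μ₁) (hμ₂ : 0 ≤ μ₂)
    (ustar : E) (hustar : ustar ∈ X)
    (hmin : ∀ u ∈ X,
      p ustar + μ₁ * V xtil ustar + μ₂ * V ytil ustar
        ≤ p u + μ₁ * V xtil u + μ₂ * V ytil u) :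
    ∀ u ∈ X,
      p ustar + μ₁ * V xtil ustar + μ₂ * V ytil ustar
        ≤ p u + μ₁ * V xtil u + μ₂ * V ytil u - (μ₁ + μ₂) * V ustar u := by
  intro u hu
  have hline : HasDerivAt (fun t : ℝ => ustar + t • (u - ustar)) (u - ustar) 0 := by
    simpa using ((hasDerivAt_id (0 : ℝ)).smul_const (u - ustar)).const_add ustar
  have hwline : HasDerivAt (fun t : ℝ => w (ustar + t • (u - ustar)))
      ⟪w' ustar, u - ustar⟫ 0 := by
    have h := (hw (ustar + (0 : ℝ) • (u - ustar))).hasFDerivAt.comp_hasDerivAt (0 : ℝ) hline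
    simpa [Function.comp_def] using h
  have hg := ((hwline.sub_const (w ustar)).const_mul (μ₁ + μ₂)).add
    ((hasDerivAt_id (0 : ℝ)).mul_const
      (p u - p ustar - μ₁ * ⟪w' xtil, u - ustar⟫ - μ₂ * ⟪w' ytil, u - ustar⟫))
  have key := deriv_nonneg_of_nonneg_right hg (by simp) (by
    intro t ht0 ht1
    have hcomb : ustar + t • (u - ustar) = (1 - t) • ustar + t • u := by module
    have hmem : ustar + t • (u - ustar) ∈ X := by
      rw [hcomb]
      exact hX hustar hu (by linarith) ht0.le (by ring)
    have hpt : p (ustar + t • (u - ustar)) ≤ (1 - t) * p ustar + t * p u := by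
      rw [hcomb]
      exact hp.2 (Set.mem_univ _) (Set.mem_univ _) (by linarith) ht0.le (by ring)
    have hm := hmin _ hmem
    have hin : ∀ a c : E, ⟪a, ustar + t • (u - ustar) - c⟫
        = ⟪a, ustar - c⟫ + t * ⟪a, u - ustar⟫ := by
      intro a c
      rw [add_sub_right_comm, inner_add_right, real_inner_smul_right]
    simp only [hV, hin] at hm
    simp only [Pi.add_apply, id]
    linarith)
  have hsplit : ∀ a c : E, ⟪a, u - c⟫ = ⟪a, ustar - c⟫ + ⟪a, u - ustar⟫ := by
    intro a c
    rw [← inner_add_right]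
    congr 1
    abel
  simp only [hV]
  rw [hsplit (w' xtil) xtil, hsplit (w' ytil) ytil]
  linarith
end

section
/- Let γ > 0, µ ≥ 0, let x̲, x_{t−1} ∈ X, let G ∈ E, and set δ := G − ∇f(x̲) and x⁺ := (x_{t−1} + µγ·x̲)/(1 + µγ). Suppose x_t ∈ X minimizes x ↦ γ·[⟪G, x⟫ + h(x) + µ·V(x̲, x)] + V(x_{t−1}, x) over X. Then for every x ∈ X: γ·[l_f(x̲, x_t) − l_f(x̲, x) + h(x_t) − h(x)] ≤ γµ·V(x̲, x) + V(x_{t−1}, x) − (1 + µγ)·V(x_t, x) − ((1 + µγ)/2)·‖x_t − x⁺‖² − γ·⟪δ, x_t − x⟫. -/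
/-!
Write `φ` for the objective of the prox step. Along the segment from `xt` to `x ∈ X`, convexity of
`h` bounds `φ` above by a function that is differentiable in the segment parameter and minimal at
its left endpoint; nonnegativity of the right derivative there (`first_order_of_segment_min`) is the
variational inequality satisfied by `xt`. The three-point identity
`⟪∇w b - ∇w a, x - b⟫ = V a x - V a b - V b x` turns it into the claimed bound with
`γ μ V(xu, xt) + V(xtm, xt)` in place of the quadratic term. Strong convexity of `w` and
convexity of `‖·‖²` (`weighted_norm_sq_le`) bound this quantity below by
`(1 + μ γ) / 2 * ‖xt - xplus‖²`.
-/

open RealInnerProductSpace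

section

variable {E : Type*} [NormedAddCommGroup E] [InnerProductSpace ℝ E]

/-- First-order necessary condition at the left endpoint of a segment, for the sum of a linear
function of the segment parameter and a multiple of a differentiable function. -/
lemma first_order_of_segment_min [CompleteSpace E] {w : E → ℝ} {g p d : E} {A c : ℝ}
    (hw : HasGradientAt w g p)
    (hmin : ∀ s : ℝ, 0 < s → s ≤ 1 → 0 ≤ s * A + c * (w (p + s • d) - w p)) :
    0 ≤ A + c * ⟪g, d⟫ := by
  have hlim := (hw.hasFDerivAt.hasLineDerivAt d).tendsto_slope_zero_right
  rw [InnerProductSpace.toDual_apply_apply] at hlim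
  refine ge_of_tendsto ((hlim.const_mul c).const_add A) ?_
  filter_upwards [Ioc_mem_nhdsGT (zero_lt_one' ℝ)] with s hs
  have hs0 := hs.1
  have h1 := mul_nonneg (inv_nonneg.2 hs0.le) (hmin s hs.1 hs.2)
  have h2 : s⁻¹ * (s * A + c * (w (p + s • d) - w p))
      = A + c * (s⁻¹ * (w (p + s • d) - w p)) := by
    field_simp
  rw [h2] at h1
  simpa using h1

/-- Jensen's inequality for `‖·‖²` at `z - p`, `z - q` with weights proportional to `1` and `a`. -/
lemma weighted_norm_sq_le {a : ℝ} (ha : 0 ≤ a) (z p q : E) :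
    (1 + a) * ‖z - (1 + a)⁻¹ • (p + a • q)‖ ^ 2 ≤ ‖z - p‖ ^ 2 + a * ‖z - q‖ ^ 2 := by
  have hpos : 0 < 1 + a := by linarith
  have hz : z - (1 + a)⁻¹ • (p + a • q) = (1 + a)⁻¹ • ((z - p) + a • (z - q)) := by
    rw [eq_inv_smul_iff₀ hpos.ne', smul_sub, smul_inv_smul₀ hpos.ne']
    module
  rw [hz, norm_smul, mul_pow, norm_add_sq_real, norm_smul, real_inner_smul_right,
    Real.norm_of_nonneg ha, Real.norm_of_nonneg (inv_nonneg.2 hpos.le)]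
  -- The defect, multiplied by `1 + a`, is `a * ‖(z - p) - (z - q)‖ ^ 2`.
  have hd := mul_nonneg ha (sq_nonneg ‖(z - p) - (z - q)‖)
  rw [norm_sub_sq_real] at hd
  rw [← mul_assoc, show (1 + a) * (1 + a)⁻¹ ^ 2 = (1 + a)⁻¹ by field_simp,
    inv_mul_le_iff₀ hpos]
  linarith

end

/-- Lemma `lem_VRASGD_opt_cond`: optimality conditions of the prox-mapping step of Varag. -/
theorem stmt6 {E : Type*} [NormedAddCommGroup E] [InnerProductSpace ℝ E] [CompleteSpace E]
    (X : Set E) (hX : Convex ℝ X)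
    (f : E → ℝ) (f' : E → E) (hf : ∀ x, HasGradientAt f (f' x) x)
    (h : E → ℝ) (hh : ConvexOn ℝ Set.univ h)
    (w : E → ℝ) (w' : E → E)
    (hwconv : ConvexOn ℝ Set.univ w)
    (hw : ∀ x, HasGradientAt w (w' x) x)
    (V : E → E → ℝ) (hV : ∀ a b, V a b = w b - w a - ⟪w' a, b - a⟫)
    (hVsc : ∀ a b, V a b ≥ 1 / 2 * ‖b - a‖ ^ 2)
    (γ μ : ℝ) (hγ : 0 < γ) (hμ : 0 ≤ μ)
    (xu xtm : E) (hxu : xu ∈ X) (hxtm : xtm ∈ X)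
    (G δ : E) (hδ : δ = G - f' xu)
    (xplus : E) (hxplus : xplus = (1 + μ * γ)⁻¹ • (xtm + (μ * γ) • xu))
    (xt : E) (hxt : xt ∈ X)
    (hmin : ∀ x ∈ X,
      γ * (⟪G, xt⟫ + h xt + μ * V xu xt) + V xtm xt
        ≤ γ * (⟪G, x⟫ + h x + μ * V xu x) + V xtm x) :
    ∀ x ∈ X,
      γ * ((f xu + ⟪f' xu, xt - xu⟫) - (f xu + ⟪f' xu, x - xu⟫) + h xt - h x)
        ≤ γ * μ * V xu x + V xtm x - (1 + μ * γ) * V xt x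
          - (1 + μ * γ) / 2 * ‖xt - xplus‖ ^ 2 - γ * ⟪δ, xt - x⟫ := by
  intro x hx
  have hfirst : 0 ≤ (γ * (⟪G, x - xt⟫ + (h x - h xt)) - ⟪(γ * μ) • w' xu + w' xtm, x - xt⟫)
      + (1 + γ * μ) * ⟪w' xt, x - xt⟫ := by
    refine first_order_of_segment_min (hw xt) fun s hs0 hs1 => ?_
    have hmem : xt + s • (x - xt) ∈ X := hX.add_smul_sub_mem hxt hx ⟨hs0.le, hs1⟩
    have hcomb : (1 - s) • xt + s • x = xt + s • (x - xt) := by module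
    have hconv := hh.2 (Set.mem_univ xt) (Set.mem_univ x) (sub_nonneg.2 hs1) hs0.le (by ring)
    rw [hcomb, smul_eq_mul, smul_eq_mul] at hconv
    have hγconv := mul_le_mul_of_nonneg_left hconv hγ.le
    have hle := hmin _ hmem
    simp only [hV, inner_sub_right, inner_add_right, inner_add_left, real_inner_smul_left,
      real_inner_smul_right] at hle ⊢
    linarith
  have hquad := weighted_norm_sq_le (mul_nonneg hμ hγ.le) xt xtm xu
  rw [← hxplus] at hquad
  have hsc_u := mul_le_mul_of_nonneg_left (hVsc xu xt) (mul_nonneg hμ hγ.le)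
  have hsc_t := hVsc xtm xt
  -- The three-point identity for `V`, with base points `xu` and `xtm`.
  have three_point : ∀ a, ⟪w' xt, x - xt⟫ - ⟪w' a, x - xt⟫ = V a x - V a xt - V xt x := by
    intro a
    simp only [hV, inner_sub_right]
    ring
  have htp_u := congrArg (fun r => μ * γ * r) (three_point xu)
  have htp_t := three_point xtm
  have hG : γ * ⟪δ, xt - x⟫ = γ * (-⟪G, x - xt⟫ - (⟪f' xu, xt - xu⟫ - ⟪f' xu, x - xu⟫)) := by
    rw [hδ]
    simp only [inner_sub_left, inner_sub_right]
    ring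
  rw [inner_add_left, real_inner_smul_left] at hfirst
  linarith
end

section
/- Let µ ≥ 0 and γ ≥ 0, and let u, x', y ∈ E. Then γµ·V(u, y) + V(x', y) ≥ ((1 + µγ)/2)·‖y − (x' + µγ·u)/(1 + µγ)‖². -/
/-! Put `t = μγ`. The point `(x' + t u) / (1 + t)` is the weighted mean of `x'` and `u`, so strong
convexity of `V` reduces the claim to convexity of the squared norm, whose defect here is
`t / (2 (1 + t)) * ‖x' - u‖²`. -/

open RealInnerProductSpace

/-- `γµ·V(u, y) + V(x', y) ≥ ((1 + µγ)/2)·‖y − (x' + µγ·u)/(1 + µγ)‖²` for a prox-function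
`V` that is strongly convex with modulus 1. -/
theorem stmt7 {E : Type*} [NormedAddCommGroup E] [InnerProductSpace ℝ E] [CompleteSpace E]
    (w : E → ℝ) (w' : E → E)
    (hwconv : ConvexOn ℝ Set.univ w)
    (hw : ∀ x, HasGradientAt w (w' x) x)
    (V : E → E → ℝ) (hV : ∀ a b, V a b = w b - w a - ⟪w' a, b - a⟫)
    (hVsc : ∀ a b, V a b ≥ 1 / 2 * ‖b - a‖ ^ 2)
    (μ γ : ℝ) (hμ : 0 ≤ μ) (hγ : 0 ≤ γ)
    (u x' y : E) :
    γ * μ * V u y + V x' y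
      ≥ (1 + μ * γ) / 2 * ‖y - (1 + μ * γ)⁻¹ • (x' + (μ * γ) • u)‖ ^ 2 := by
  rw [mul_comm γ μ]
  have ht : 0 ≤ μ * γ := mul_nonneg hμ hγ
  have hu := mul_le_mul_of_nonneg_left (hVsc u y) ht
  have hx := hVsc x' y
  generalize μ * γ = t at *
  have h1 : 0 < 1 + t := by linarith
  have hy : y - (1 + t)⁻¹ • (x' + t • u) = (1 + t)⁻¹ • ((y - x') + t • (y - u)) := by
    rw [← sub_eq_zero]
    match_scalars <;> field_simp <;> ring
  -- With `a = y - u`, `b = y - x'`: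
  -- `(1 + t) (t ‖a‖² + ‖b‖²) - ‖b + t a‖² = t ‖b - a‖² ≥ 0`.
  have key : ‖(y - x') + t • (y - u)‖ ^ 2
      ≤ (1 + t) * (t * ‖y - u‖ ^ 2 + ‖y - x'‖ ^ 2) := by
    have hd := mul_nonneg ht (sq_nonneg ‖(y - x') - (y - u)‖)
    rw [norm_sub_sq_real] at hd
    rw [norm_add_sq_real, inner_smul_right, norm_smul, mul_pow, Real.norm_eq_abs, sq_abs]
    linarith
  have hn : (1 + t) / 2 * ‖y - (1 + t)⁻¹ • (x' + t • u)‖ ^ 2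
      = ‖(y - x') + t • (y - u)‖ ^ 2 / (2 * (1 + t)) := by
    rw [hy, norm_smul, mul_pow, Real.norm_eq_abs, sq_abs]
    field_simp
  have hk : ‖(y - x') + t • (y - u)‖ ^ 2 / (2 * (1 + t))
      ≤ (t * ‖y - u‖ ^ 2 + ‖y - x'‖ ^ 2) / 2 := by
    rw [div_le_iff₀ (by positivity)]
    linarith
  rw [hn]
  linarith
end

section
/- Let α ∈ (0,1], p ∈ [0,1] with α + p ≤ 1, µ ≥ 0 and γ > 0 satisfy 1 + µγ − Lαγ > 0 and p ≥ (L_Q·αγ)/(1 + µγ − Lαγ). Let x̄_{t−1}, x_{t−1}, x̃ ∈ X and set x̲ := [(1 + µγ)(1 − α − p)·x̄_{t−1} + α·x_{t−1} + (1 + µγ)·p·x̃]/(1 + µγ(1 − α)). For each i ∈ {1,…,m} set G(i) := (1/(m·q_i))·(∇f_i(x̲) − ∇f_i(x̃)) + ∇f(x̃), let x_t(i) ∈ X minimize x ↦ γ·[⟪G(i), x⟫ + h(x) + µ·V(x̲, x)] + V(x_{t−1}, x) over X, and set x̄_t(i) := (1 − α − p)·x̄_{t−1} + α·x_t(i) +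 p·x̃. Then for every x ∈ X: ∑_{i=1}^m q_i·[(γ/α)·(ψ(x̄_t(i)) − ψ(x)) + (1 + µγ)·V(x_t(i), x)] ≤ (γ/α)·(1 − α − p)·(ψ(x̄_{t−1}) − ψ(x)) + (γp/α)·(ψ(x̃) − ψ(x)) + V(x_{t−1}, x). -/
/-!
Fix the anchor `u = xu` and put `δ i = G i - ∇F u`, so that `∑ q i • δ i = 0`. The choice of `u`
makes `d i = xbt i - u` equal to `α / (1 + μγ)` times `(xt i - xtm) + μγ (xt i - u)`, so strong
convexity of `w` bounds `V xtm (xt i) + μγ V u (xt i)` below by `(1 + μγ) / (2α²) ‖d i‖²`.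

Smoothness of `F` at `u` (`descent`) and the optimality of `xt i` (`three_point`) bound
`ψ (xbt i)` by terms whose `q`-average is the desired right side, plus
`-⟪δ i, d i⟫ - b/2 ‖d i‖² ≤ ‖δ i‖² / (2b)` with `b = (1 + μγ - Lαγ) / (αγ)`. The vectors `d i` and
`α (xt i - u)` differ by a vector independent of `i`, so this replacement does not affect the
average. Finally the variance `∑ q i ‖δ i‖²` is at most
`2 LQ (F xtil - F u - ⟪∇F u, xtil - u⟫)` by co-coercivity of the gradients
(`cocoercive`, `variance_bound`), and the condition on `p` lets the term with weight `p` on `xtil`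
absorb it.
-/

open RealInnerProductSpace Finset

section Aux

variable {E : Type*} [NormedAddCommGroup E] [InnerProductSpace ℝ E] [CompleteSpace E]

/-! ### Gradient inequalities for convex and smooth functions -/

lemma deriv_le_of_le_linear {φ : ℝ → ℝ} {d c : ℝ} (hd : HasDerivAt φ d 0)
    (hle : ∀ s ∈ Set.Ioc (0 : ℝ) 1, φ s - φ 0 ≤ s * c) : d ≤ c := by
  have ht := (hasDerivAt_iff_tendsto_slope_zero.1 hd).mono_left
    (nhdsWithin_mono (0 : ℝ) (fun x (hx : x ∈ Set.Ioi (0 : ℝ)) => (ne_of_gt hx : x ≠ 0)))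
  refine le_of_tendsto ht ?_
  filter_upwards [Ioc_mem_nhdsGT (zero_lt_one' ℝ)] with s hs
  have := hle s hs
  rw [zero_add, smul_eq_mul, inv_mul_le_iff₀ hs.1]
  exact this

lemma hasDerivAt_line_s10 {g : E → ℝ} {g' : E → E} (hg : ∀ x, HasGradientAt g (g' x) x)
    (x v : E) (s : ℝ) :
    HasDerivAt (fun s : ℝ => g (x + s • v)) ⟪g' (x + s • v), v⟫ s := by
  have h1 : HasDerivAt (fun s : ℝ => x + s • v) v s := by
    simpa using ((hasDerivAt_id s).smul_const v).const_add x
  have h2 := (hg (x + s • v)).hasFDerivAt.comp_hasDerivAt s h1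
  simpa [Function.comp_def] using h2

lemma gradient_ineq {g : E → ℝ} {g' : E → E} (hc : ConvexOn ℝ Set.univ g)
    (hg : ∀ x, HasGradientAt g (g' x) x) (x y : E) :
    g x + ⟪g' x, y - x⟫ ≤ g y := by
  have hd := hasDerivAt_line_s10 hg x (y - x) 0
  rw [zero_smul, add_zero] at hd
  have := deriv_le_of_le_linear (c := g y - g x) hd (by
    intro s hs
    have h1 := hc.2 (Set.mem_univ x) (Set.mem_univ y) (sub_nonneg.2 hs.2) hs.1.le (by ring)
    have e : x + s • (y - x) = (1 - s) • x + s • y := by module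
    simp only [smul_eq_mul] at h1
    simp only [zero_smul, add_zero, e]
    linarith)
  linarith

lemma descent_s10 {g : E → ℝ} {g' : E → E} {l : ℝ} (hg : ∀ x, HasGradientAt g (g' x) x)
    (hl : ∀ x y, ‖g' x - g' y‖ ≤ l * ‖x - y‖) (x y : E) :
    g y ≤ g x + ⟪g' x, y - x⟫ + l / 2 * ‖y - x‖ ^ 2 := by
  set v := y - x with hv
  have hd : ∀ s : ℝ, HasDerivAt
      (fun s : ℝ => g (x + s • v) - s * ⟪g' x, v⟫ - l / 2 * ‖v‖ ^ 2 * s ^ 2)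
      (⟪g' (x + s • v), v⟫ - 1 * ⟪g' x, v⟫ - l / 2 * ‖v‖ ^ 2 * (2 * s)) s := by
    intro s
    refine ((hasDerivAt_line_s10 hg x v s).sub ((hasDerivAt_id s).mul_const _)).sub ?_
    simpa using (hasDerivAt_pow 2 s).const_mul (l / 2 * ‖v‖ ^ 2)
  have hanti := antitoneOn_of_deriv_nonpos (convex_Icc (0 : ℝ) 1)
    (fun s _ => (hd s).continuousAt.continuousWithinAt)
    (fun s _ => (hd s).differentiableAt.differentiableWithinAt) (by
      intro s hs
      rw [interior_Icc] at hs
      rw [(hd s).deriv]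
      have h1 : ⟪g' (x + s • v) - g' x, v⟫ ≤ ‖g' (x + s • v) - g' x‖ * ‖v‖ :=
        real_inner_le_norm _ _
      have h2 := hl (x + s • v) x
      rw [add_sub_cancel_left, norm_smul, Real.norm_of_nonneg hs.1.le] at h2
      have h3 := mul_le_mul_of_nonneg_right h2 (norm_nonneg v)
      rw [inner_sub_left] at h1
      nlinarith)
  have := hanti (Set.left_mem_Icc.2 zero_le_one) (Set.right_mem_Icc.2 zero_le_one) zero_le_one
  have e : x + v = y := by rw [hv]; abel
  simp only [one_smul, zero_smul, add_zero, e] at this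
  linarith

/-- Co-coercivity of the gradient of a smooth convex function: compare the gradient inequality
at `x` and the descent inequality at `y` at the point `y - l⁻¹ • (g' y - g' x)`. -/
lemma cocoercive {g : E → ℝ} {g' : E → E} {l : ℝ} (hl0 : 0 < l)
    (hc : ConvexOn ℝ Set.univ g) (hg : ∀ x, HasGradientAt g (g' x) x)
    (hl : ∀ x y, ‖g' x - g' y‖ ≤ l * ‖x - y‖) (x y : E) :
    ‖g' x - g' y‖ ^ 2 ≤ 2 * l * (g y - g x - ⟪g' x, y - x⟫) := by
  set r := g' y - g' x with hr
  have h1 := gradient_ineq hc hg x (y - l⁻¹ • r)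
  have h2 := descent_s10 hg hl y (y - l⁻¹ • r)
  have e1 : y - l⁻¹ • r - x = (y - x) - l⁻¹ • r := by abel
  have e2 : y - l⁻¹ • r - y = -(l⁻¹ • r) := by abel
  rw [e1, inner_sub_right, inner_smul_right] at h1
  rw [e2, norm_neg, inner_neg_right, inner_smul_right, norm_smul,
    Real.norm_of_nonneg (inv_pos.2 hl0).le] at h2
  have h3 : ⟪g' y, r⟫ - ⟪g' x, r⟫ = ‖r‖ ^ 2 := by
    rw [← inner_sub_left, ← hr, real_inner_self_eq_norm_sq]
  have e3 : ‖g' x - g' y‖ = ‖r‖ := norm_sub_rev _ _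
  rw [e3]
  have h4 : l⁻¹ * ‖r‖ ^ 2 - l / 2 * (l⁻¹ * ‖r‖) ^ 2 ≤ g y - g x - ⟪g' x, y - x⟫ := by
    have h6 := congrArg (l⁻¹ * ·) h3
    simp only [mul_sub] at h6
    linarith
  have h5 : l⁻¹ * ‖r‖ ^ 2 - l / 2 * (l⁻¹ * ‖r‖) ^ 2 = ‖r‖ ^ 2 / (2 * l) := by
    field_simp
    ring
  rw [h5, div_le_iff₀ (by positivity)] at h4
  linarith

/-! ### Optimality of the prox step -/

/-- The prox-inequality: the minimizer `z` of a composite objective satisfies the optimality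
inequality with the additional Bregman term `(1 + μγ) V z x`. -/
lemma three_point {X : Set E} (hX : Convex ℝ X) {h : E → ℝ} (hh : ConvexOn ℝ Set.univ h)
    {w : E → ℝ} {w' : E → E} (hw : ∀ x, HasGradientAt w (w' x) x)
    {V : E → E → ℝ} (hV : ∀ a b, V a b = w b - w a - ⟪w' a, b - a⟫)
    {μ γ : ℝ} (hγ : 0 < γ) {g u c z : E} (hz : z ∈ X)
    (hmin : ∀ x ∈ X, γ * (⟪g, z⟫ + h z + μ * V u z) + V c z
      ≤ γ * (⟪g, x⟫ + h x + μ * V u x) + V c x) {x : E} (hx : x ∈ X) :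
    γ * (⟪g, z⟫ + h z + μ * V u z) + V c z + (1 + μ * γ) * V z x
      ≤ γ * (⟪g, x⟫ + h x + μ * V u x) + V c x := by
  set v := x - z with hv
  -- The negative of the smooth part of the objective along the segment, up to a constant.
  have hd : HasDerivAt (fun s : ℝ => -((1 + μ * γ) * w (z + s • v)
      + s * (γ * ⟪g, v⟫ - γ * μ * ⟪w' u, v⟫ - ⟪w' c, v⟫)))
      (-((1 + μ * γ) * ⟪w' z, v⟫ + 1 * (γ * ⟪g, v⟫ - γ * μ * ⟪w' u, v⟫ - ⟪w' c, v⟫))) 0 := by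
    have h0 := hasDerivAt_line_s10 hw z v 0
    rw [zero_smul, add_zero] at h0
    exact ((h0.const_mul (1 + μ * γ)).add ((hasDerivAt_id (0 : ℝ)).mul_const _)).neg
  have key := deriv_le_of_le_linear (c := γ * (h x - h z)) hd (by
    intro s hs
    have e : z + s • v = (1 - s) • z + s • x := by rw [hv]; module
    have hmem : z + s • v ∈ X := by
      rw [e]; exact hX hz hx (sub_nonneg.2 hs.2) hs.1.le (by ring)
    have h1 := hh.2 (Set.mem_univ z) (Set.mem_univ x) (sub_nonneg.2 hs.2) hs.1.le (by ring)
    rw [← e] at h1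
    simp only [smul_eq_mul] at h1
    have h2 := hmin _ hmem
    have e1 : ∀ a, z + s • v - a = (z - a) + s • v := fun a => by abel
    simp only [hV, e1, inner_add_right, inner_smul_right] at h2
    simp only [zero_smul, add_zero, zero_mul]
    have h3 := mul_le_mul_of_nonneg_left h1 hγ.le
    linarith)
  have e2 : ∀ a, x - a = (z - a) + v := fun a => by rw [hv]; abel
  have e3 : ⟪g, x⟫ = ⟪g, z⟫ + ⟪g, v⟫ := by rw [← inner_add_right, hv]; congr 1; abel
  rw [hV u x, hV c x, hV z x, hV u z, hV c z, e2 u, e2 c, ← hv, inner_add_right,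
    inner_add_right, e3]
  linarith

/-! ### Variance of the gradient estimator -/

/-- The second moment dominates the variance: `a` is the mean of the `r i`. -/
lemma sum_norm_sub_sq_le {E : Type*} [NormedAddCommGroup E] [InnerProductSpace ℝ E]
    {m : ℕ} {q : Fin m → ℝ} (hqsum : ∑ i, q i = 1) (r : Fin m → E) (a : E)
    (ha : ∑ i, q i • r i = a) :
    ∑ i, q i * ‖r i - a‖ ^ 2 ≤ ∑ i, q i * ‖r i‖ ^ 2 := by
  have h1 : ∑ i, q i * ⟪r i, a⟫ = ‖a‖ ^ 2 := by
    rw [← real_inner_self_eq_norm_sq]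
    nth_rewrite 2 [← ha]
    rw [sum_inner]
    simp [inner_smul_left]
  have h2 : ∑ i, q i * ‖r i - a‖ ^ 2
      = ∑ i, q i * ‖r i‖ ^ 2 - 2 * ∑ i, q i * ⟪r i, a⟫ + (∑ i, q i) * ‖a‖ ^ 2 := by
    rw [Finset.mul_sum, Finset.sum_mul, ← Finset.sum_sub_distrib, ← Finset.sum_add_distrib]
    refine Finset.sum_congr rfl fun i _ => ?_
    rw [norm_sub_sq_real]; ring
  rw [h2, h1, hqsum]
  nlinarith [sq_nonneg ‖a‖]

/-- Variance of the importance-sampled gradient difference, controlled by the linearization gap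
of the average. -/
lemma variance_bound {m : ℕ} (hm : 0 < m) {f : Fin m → E → ℝ} {f' : Fin m → E → E}
    {Li q : Fin m → ℝ} (hLipos : ∀ i, 0 < Li i)
    (hconv : ∀ i, ConvexOn ℝ Set.univ (f i))
    (hdiff : ∀ i x, HasGradientAt (f i) (f' i x) x)
    (hlip : ∀ i x y, ‖f' i x - f' i y‖ ≤ Li i * ‖x - y‖)
    (hq : ∀ i, 0 < q i) {M : ℝ} (hM : ∀ i, Li i / q i ≤ M) (u y : E) :
    ∑ i, q i * ‖(1 / ((m : ℝ) * q i)) • (f' i u - f' i y)‖ ^ 2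
      ≤ 2 * (1 / (m : ℝ) * M) * ((1 / (m : ℝ)) * ∑ i, (f i y - f i u - ⟪f' i u, y - u⟫)) := by
  have hm' : (0 : ℝ) < m := by exact_mod_cast hm
  rw [Finset.mul_sum, Finset.mul_sum]
  refine Finset.sum_le_sum fun i _ => ?_
  have hqi := hq i
  have h1 := cocoercive (hLipos i) (hconv i) (hdiff i) (hlip i) u y
  have h0 := gradient_ineq (hconv i) (hdiff i) u y
  set D := f i y - f i u - ⟪f' i u, y - u⟫ with hD
  have hD0 : 0 ≤ D := by linarith
  rw [norm_smul, Real.norm_of_nonneg (by positivity)]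
  calc q i * (1 / (m * q i) * ‖f' i u - f' i y‖) ^ 2
      = 1 / (m ^ 2 * q i) * ‖f' i u - f' i y‖ ^ 2 := by field_simp
    _ ≤ 1 / (m ^ 2 * q i) * (2 * Li i * D) := by gcongr
    _ = 2 / m ^ 2 * D * (Li i / q i) := by field_simp
    _ ≤ 2 / m ^ 2 * D * M := by
        have := hM i
        gcongr
    _ = 2 * (1 / m * M) * (1 / m * D) := by field_simp

/-! ### Convex combinations of three points -/

lemma mem_three {M : Type*} [AddCommGroup M] [Module ℝ M] {S : Set M} (hS : Convex ℝ S)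
    {x y z : M} (hx : x ∈ S) (hy : y ∈ S) (hz : z ∈ S) {a b c : ℝ} (ha : 0 ≤ a) (hb : 0 ≤ b)
    (hc : 0 ≤ c) (habc : a + b + c = 1) : a • x + b • y + c • z ∈ S := by
  have := hS.sum_mem (t := Finset.univ) (w := ![a, b, c]) (z := ![x, y, z])
    (by intro i _; fin_cases i <;> simpa) (by simpa [Fin.sum_univ_three] using habc)
    (by intro i _; fin_cases i <;> simpa)
  simpa [Fin.sum_univ_three] using this

end Aux

/-! ### Progress of one iteration -/

/-- Lemma `Lemma_VARSGD_iter`: the expected per-iteration progress of Varag, taking the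
expectation over the random index `i` chosen with probabilities `q i`. -/
theorem stmt10 {E : Type*} [NormedAddCommGroup E] [InnerProductSpace ℝ E] [CompleteSpace E]
    (m : ℕ) (hm : 0 < m)
    (f : Fin m → E → ℝ) (f' : Fin m → E → E) (Li : Fin m → ℝ) (q : Fin m → ℝ)
    (hLipos : ∀ i, 0 < Li i)
    (hconv : ∀ i, ConvexOn ℝ Set.univ (f i))
    (hdiff : ∀ i x, HasGradientAt (f i) (f' i x) x)
    (hlip : ∀ i x y, ‖f' i x - f' i y‖ ≤ Li i * ‖x - y‖)
    (hq : ∀ i, 0 < q i) (hqsum : ∑ i, q i = 1)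
    (F : E → ℝ) (F' : E → E)
    (hF : ∀ x, F x = (1 / (m : ℝ)) * ∑ i, f i x)
    (hF' : ∀ x, F' x = (1 / (m : ℝ)) • ∑ i, f' i x)
    (L LQ : ℝ)
    (hL : L = (1 / (m : ℝ)) * ∑ i, Li i)
    (hLQ : LQ = (1 / (m : ℝ)) *
      Finset.univ.sup' ⟨⟨0, hm⟩, Finset.mem_univ _⟩ (fun i => Li i / q i))
    (X : Set E) (hX : Convex ℝ X)
    (h : E → ℝ) (hh : ConvexOn ℝ Set.univ h)
    (ψ : E → ℝ) (hψ : ∀ x, ψ x = F x + h x)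
    (w : E → ℝ) (w' : E → E)
    (hwconv : ConvexOn ℝ Set.univ w)
    (hw : ∀ x, HasGradientAt w (w' x) x)
    (V : E → E → ℝ) (hV : ∀ a b, V a b = w b - w a - ⟪w' a, b - a⟫)
    (hVsc : ∀ a b, V a b ≥ 1 / 2 * ‖b - a‖ ^ 2)
    (μ : ℝ) (hμ : 0 ≤ μ)
    (hsc : ∀ x ∈ X, ∀ y ∈ X, F y ≥ F x + ⟪F' x, y - x⟫ + μ * V x y)
    (α p γ : ℝ) (hα0 : 0 < α) (hα1 : α ≤ 1) (hp0 : 0 ≤ p) (hp1 : p ≤ 1)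
    (hαp : α + p ≤ 1) (hγ : 0 < γ)
    (hcond1 : 0 < 1 + μ * γ - L * α * γ)
    (hcond2 : LQ * α * γ / (1 + μ * γ - L * α * γ) ≤ p)
    (xbtm xtm xtil : E) (hxbtm : xbtm ∈ X) (hxtm : xtm ∈ X) (hxtil : xtil ∈ X)
    (xu : E) (hxu : xu = (1 + μ * γ * (1 - α))⁻¹ •
      ((1 + μ * γ) • ((1 - α - p) • xbtm) + α • xtm + ((1 + μ * γ) * p) • xtil))
    (G : Fin m → E)
    (hG : ∀ i, G i = (1 / ((m : ℝ) * q i)) • (f' i xu - f' i xtil) + F' xtil)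
    (xt : Fin m → E) (hxtmem : ∀ i, xt i ∈ X)
    (hmin : ∀ i, ∀ x ∈ X,
      γ * (⟪G i, xt i⟫ + h (xt i) + μ * V xu (xt i)) + V xtm (xt i)
        ≤ γ * (⟪G i, x⟫ + h x + μ * V xu x) + V xtm x)
    (xbt : Fin m → E)
    (hxbt : ∀ i, xbt i = (1 - α - p) • xbtm + α • xt i + p • xtil) :
    ∀ x ∈ X,
      ∑ i, q i * ((γ / α) * (ψ (xbt i) - ψ x) + (1 + μ * γ) * V (xt i) x)
        ≤ (γ / α) * (1 - α - p) * (ψ xbtm - ψ x) + (γ * p / α) * (ψ xtil - ψ x)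
          + V xtm x := by
  intro x hx
  have hm' : (0 : ℝ) < m := by exact_mod_cast hm
  have hμγ : 0 ≤ μ * γ := mul_nonneg hμ hγ.le
  have h1μ : 0 < 1 + μ * γ := by linarith
  have hden : 0 < 1 + μ * γ * (1 - α) := by nlinarith
  have hV0 : ∀ a b, 0 ≤ V a b := fun a b => le_trans (by positivity) (hVsc a b)
  have hxuX : xu ∈ X := by
    have e : xu = ((1 + μ * γ * (1 - α))⁻¹ * ((1 + μ * γ) * (1 - α - p))) • xbtm
        + ((1 + μ * γ * (1 - α))⁻¹ * α) • xtm
        + ((1 + μ * γ * (1 - α))⁻¹ * ((1 + μ * γ) * p)) • xtil := by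
      rw [hxu]; module
    rw [e]
    exact mem_three hX hxbtm hxtm hxtil
      (mul_nonneg (inv_nonneg.2 hden.le) (mul_nonneg h1μ.le (by linarith)))
      (mul_nonneg (inv_nonneg.2 hden.le) hα0.le)
      (mul_nonneg (inv_nonneg.2 hden.le) (mul_nonneg h1μ.le hp0))
      (by field_simp; ring)
  have hxu' : (1 + μ * γ * (1 - α)) • xu
      = (1 + μ * γ) • ((1 - α - p) • xbtm) + α • xtm + ((1 + μ * γ) * p) • xtil := by
    rw [hxu, smul_inv_smul₀ hden.ne']
  set g := F' xu with hg
  set δ : Fin m → E := fun i => G i - g with hδ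
  set d : Fin m → E := fun i => xbt i - xu with hd
  set D := F xtil - F xu - ⟪g, xtil - xu⟫ with hD
  have hD0 : 0 ≤ D := by
    have := hsc xu hxuX xtil hxtil
    have := mul_nonneg hμ (hV0 xu xtil)
    linarith
  have hF'sub : ∑ i, q i • ((1 / ((m : ℝ) * q i)) • (f' i xu - f' i xtil)) = g - F' xtil := by
    rw [hg, hF', hF', ← smul_sub, ← Finset.sum_sub_distrib, Finset.smul_sum]
    refine Finset.sum_congr rfl fun i _ => ?_
    rw [smul_smul]
    congr 1
    have := (hq i).ne'
    field_simp
  have hδ' : ∀ i, δ i = (1 / ((m : ℝ) * q i)) • (f' i xu - f' i xtil) - (g - F' xtil) := by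
    intro i; simp only [hδ, hG]; abel
  have hδ0 : ∑ i, q i • δ i = 0 := by
    simp only [hδ', smul_sub (q _) _ (g - F' xtil)]
    rw [Finset.sum_sub_distrib, hF'sub, ← Finset.sum_smul, hqsum, one_smul, sub_self]
  have hmean : ∀ y : E, ∑ i, q i * ⟪δ i, y⟫ = 0 := by
    intro y
    have : ⟪∑ i, q i • δ i, y⟫ = ∑ i, q i * ⟪δ i, y⟫ := by
      rw [sum_inner]; simp [inner_smul_left]
    rw [← this, hδ0, inner_zero_left]
  have hvar : ∑ i, q i * ‖δ i‖ ^ 2 ≤ 2 * LQ * D := by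
    simp only [hδ']
    refine (sum_norm_sub_sq_le hqsum _ _ hF'sub).trans ?_
    have hM : ∀ i, Li i / q i ≤ Finset.univ.sup' ⟨⟨0, hm⟩, Finset.mem_univ _⟩
        (fun i => Li i / q i) :=
      fun i => Finset.le_sup' (fun i => Li i / q i) (Finset.mem_univ i)
    refine (variance_bound hm hLipos hconv hdiff hlip hq hM xu xtil).trans_eq ?_
    rw [← hLQ]
    congr 1
    rw [hD, hF, hF, hg, hF', inner_smul_left, sum_inner, Finset.sum_sub_distrib,
      Finset.sum_sub_distrib]
    simp only [conj_trivial]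
    ring
  have hdesc : ∀ y, F y ≤ F xu + ⟪g, y - xu⟫ + L / 2 * ‖y - xu‖ ^ 2 := by
    intro y
    have h1 : ∑ i, f i y ≤ ∑ i, (f i xu + ⟪f' i xu, y - xu⟫ + Li i / 2 * ‖y - xu‖ ^ 2) :=
      Finset.sum_le_sum fun i _ => descent_s10 (hdiff i) (hlip i) xu y
    rw [Finset.sum_add_distrib, Finset.sum_add_distrib, ← Finset.sum_mul, ← Finset.sum_div] at h1
    have h2 := mul_le_mul_of_nonneg_left h1 (by positivity : (0 : ℝ) ≤ 1 / m)
    rw [hg, hF', hF, hF, inner_smul_left, sum_inner, hL]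
    simp only [conj_trivial]
    linarith
  set c := 1 + μ * γ - L * α * γ with hc
  set R := F xu + (1 - α - p) * (F xbtm - F xu) + p * (F xtil - F xu - D)
    + (1 - α - p) * h xbtm + p * h xtil + α * (F x - F xu) + α * h x + α / γ * V xtm x with hR
  -- The offset between `α • (xt i - xu)` and `d i`.
  set k := (1 - α - p) • xbtm + p • xtil - (1 - α) • xu with hk
  have hstep : ∀ i, ψ (xbt i) + α / γ * (1 + μ * γ) * V (xt i) x
      ≤ R + ⟪δ i, k + α • (x - xu)⟫ + α * γ / (2 * c) * ‖δ i‖ ^ 2 := by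
    intro i
    have hdk : d i = k + α • (xt i - xu) := by
      simp only [hd, hxbt, hk]; module
    have hdi : (1 + μ * γ) • d i = α • ((xt i - xtm) + (μ * γ) • (xt i - xu)) := by
      have e : (1 + μ * γ) • d i - α • ((xt i - xtm) + (μ * γ) • (xt i - xu))
          = ((1 + μ * γ) • ((1 - α - p) • xbtm) + α • xtm + ((1 + μ * γ) * p) • xtil)
            - (1 + μ * γ * (1 - α)) • xu := by
        simp only [hd, hxbt]; module
      rw [← hxu', sub_self] at e
      exact sub_eq_zero.1 e
    have hnorm : (1 + μ * γ) * ‖d i‖ ^ 2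
        ≤ α ^ 2 * (‖xt i - xtm‖ ^ 2 + μ * γ * ‖xt i - xu‖ ^ 2) := by
      have e1 : (1 + μ * γ) * ‖d i‖ ≤ α * (‖xt i - xtm‖ + μ * γ * ‖xt i - xu‖) := by
        have := congrArg norm hdi
        rw [norm_smul, norm_smul, Real.norm_of_nonneg h1μ.le, Real.norm_of_nonneg hα0.le] at this
        rw [this]
        refine mul_le_mul_of_nonneg_left ((norm_add_le _ _).trans_eq ?_) hα0.le
        rw [norm_smul, Real.norm_of_nonneg hμγ]
      have e2 := pow_le_pow_left₀ (by positivity) e1 2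
      have e3 : (‖xt i - xtm‖ + μ * γ * ‖xt i - xu‖) ^ 2
          ≤ (1 + μ * γ) * (‖xt i - xtm‖ ^ 2 + μ * γ * ‖xt i - xu‖ ^ 2) := by
        nlinarith [mul_nonneg hμγ (sq_nonneg (‖xt i - xtm‖ - ‖xt i - xu‖))]
      have e4 := mul_le_mul_of_nonneg_left e3 (sq_nonneg α)
      refine le_of_mul_le_mul_left ?_ h1μ
      linarith
    have hVlow : (1 + μ * γ) / (2 * α * γ) * ‖d i‖ ^ 2
        ≤ α / γ * (γ * μ * V xu (xt i) + V xtm (xt i)) := by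
      have v1 := hVsc xtm (xt i)
      have v2 := mul_le_mul_of_nonneg_left (hVsc xu (xt i)) hμγ
      have : (1 + μ * γ) * ‖d i‖ ^ 2
          ≤ α ^ 2 * (2 * (γ * μ * V xu (xt i) + V xtm (xt i))) :=
        hnorm.trans (mul_le_mul_of_nonneg_left (by linarith) (sq_nonneg α))
      calc (1 + μ * γ) / (2 * α * γ) * ‖d i‖ ^ 2
          = (1 + μ * γ) * ‖d i‖ ^ 2 / (2 * α * γ) := by ring
        _ ≤ α ^ 2 * (2 * (γ * μ * V xu (xt i) + V xtm (xt i))) / (2 * α * γ) := by gcongr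
        _ = _ := by field_simp
    have h3p : α * ⟪G i, xt i⟫ + α * h (xt i) + α / γ * (γ * μ * V xu (xt i) + V xtm (xt i))
        + α / γ * (1 + μ * γ) * V (xt i) x
        ≤ α * ⟪G i, x⟫ + α * h x + α * μ * V xu x + α / γ * V xtm x := by
      have := mul_le_mul_of_nonneg_left
        (three_point hX hh hw hV hγ (hxtmem i) (hmin i) hx) (by positivity : 0 ≤ α / γ)
      have eγ : α / γ * γ = α := by field_simp
      calc _ = α / γ * (γ * (⟪G i, xt i⟫ + h (xt i) + μ * V xu (xt i)) + V xtm (xt i)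
            + (1 + μ * γ) * V (xt i) x) := by
              linear_combination (-⟪G i, xt i⟫ - h (xt i)) * eγ
        _ ≤ _ := this
        _ = _ := by linear_combination (⟪G i, x⟫ + h x + μ * V xu x) * eγ
    have hhb : h (xbt i) ≤ (1 - α - p) * h xbtm + α * h (xt i) + p * h xtil := by
      -- Jensen for three points, as membership in the convex epigraph of `h`.
      have := mem_three hh.convex_epigraph (x := (xbtm, h xbtm)) (y := (xt i, h (xt i)))
        (z := (xtil, h xtil)) ⟨Set.mem_univ _, le_rfl⟩ ⟨Set.mem_univ _, le_rfl⟩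
        ⟨Set.mem_univ _, le_rfl⟩ (by linarith : 0 ≤ 1 - α - p) hα0.le hp0 (by ring)
      rw [hxbt]
      simpa using this
    have hyoung : -⟪δ i, d i⟫ - c / (2 * α * γ) * ‖d i‖ ^ 2
        ≤ α * γ / (2 * c) * ‖δ i‖ ^ 2 := by
      have i1 := neg_le_of_abs_le (abs_real_inner_le_norm (δ i) (d i))
      have i2 : α * γ / (2 * c) * ‖δ i‖ ^ 2 - ‖δ i‖ * ‖d i‖ + c / (2 * α * γ) * ‖d i‖ ^ 2
          = (α * γ * ‖δ i‖ - c * ‖d i‖) ^ 2 / (2 * c * (α * γ)) := by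
        field_simp
        ring
      have i3 : 0 ≤ (α * γ * ‖δ i‖ - c * ‖d i‖) ^ 2 / (2 * c * (α * γ)) := by positivity
      linarith
    have hdF := hdesc (xbt i)
    change _ ≤ F xu + ⟪g, d i⟫ + L / 2 * ‖d i‖ ^ 2 at hdF
    have hgd : ⟪g, d i⟫ = (1 - α - p) * ⟪g, xbtm - xu⟫ + p * ⟪g, xtil - xu⟫
        + α * ⟪g, xt i - xu⟫ := by
      simp only [← inner_smul_right, ← inner_add_right]
      rw [hdk, hk]; congr 1; module
    have hδd : ⟪δ i, d i⟫ = ⟪δ i, k⟫ + α * (⟪G i, xt i⟫ - ⟪G i, xu⟫) - α * ⟪g, xt i - xu⟫ := by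
      rw [hdk, inner_add_right, inner_smul_right]
      simp only [hδ, inner_sub_left, inner_sub_right]
      ring
    have hδx : ⟪δ i, k + α • (x - xu)⟫
        = ⟪δ i, k⟫ + α * (⟪G i, x⟫ - ⟪G i, xu⟫) - α * ⟪g, x - xu⟫ := by
      rw [inner_add_right, inner_smul_right]
      simp only [hδ, inner_sub_left, inner_sub_right]
      ring
    have hscb : (1 - α - p) * ⟪g, xbtm - xu⟫ ≤ (1 - α - p) * (F xbtm - F xu) := by
      have := hsc xu hxuX xbtm hxbtm
      have := mul_nonneg hμ (hV0 xu xbtm)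
      exact mul_le_mul_of_nonneg_left (by linarith) (by linarith)
    have hscx : α * (⟪g, x - xu⟫ + μ * V xu x) ≤ α * (F x - F xu) :=
      mul_le_mul_of_nonneg_left (by linarith [hsc xu hxuX x hx]) hα0.le
    have hcsplit : (1 + μ * γ) / (2 * α * γ) * ‖d i‖ ^ 2
        = c / (2 * α * γ) * ‖d i‖ ^ 2 + L / 2 * ‖d i‖ ^ 2 := by
      rw [hc]; field_simp; ring
    rw [hψ, hR]
    have : F xtil - F xu - D = ⟪g, xtil - xu⟫ := by rw [hD]; ring
    rw [this]
    linarith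
  have hsum : ∑ i, q i * (ψ (xbt i) + α / γ * (1 + μ * γ) * V (xt i) x) ≤ R + p * D := by
    calc _ ≤ ∑ i, q i * (R + ⟪δ i, k + α • (x - xu)⟫ + α * γ / (2 * c) * ‖δ i‖ ^ 2) :=
          Finset.sum_le_sum fun i _ => mul_le_mul_of_nonneg_left (hstep i) (hq i).le
      _ = (∑ i, q i) * R + ∑ i, q i * ⟪δ i, k + α • (x - xu)⟫
          + α * γ / (2 * c) * ∑ i, q i * ‖δ i‖ ^ 2 := by
          rw [Finset.sum_mul, Finset.mul_sum, ← Finset.sum_add_distrib,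
            ← Finset.sum_add_distrib]
          exact Finset.sum_congr rfl fun i _ => by ring
      _ = R + α * γ / (2 * c) * ∑ i, q i * ‖δ i‖ ^ 2 := by rw [hqsum, hmean]; ring
      _ ≤ R + α * γ / (2 * c) * (2 * LQ * D) := by gcongr
      _ = R + LQ * α * γ / c * D := by field_simp
      _ ≤ R + p * D := by gcongr
  have hRD : R + p * D = (1 - α - p) * ψ xbtm + p * ψ xtil + α * ψ x + α / γ * V xtm x := by
    rw [hR, hψ, hψ, hψ]; ring
  rw [hRD] at hsum
  have hfin := mul_le_mul_of_nonneg_left hsum (by positivity : 0 ≤ γ / α)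
  have eL : ∑ i, q i * ((γ / α) * (ψ (xbt i) - ψ x) + (1 + μ * γ) * V (xt i) x)
      = γ / α * ∑ i, q i * (ψ (xbt i) + α / γ * (1 + μ * γ) * V (xt i) x) - γ / α * ψ x := by
    have : γ / α * ψ x = ∑ i, q i * (γ / α * ψ x) := by rw [← Finset.sum_mul, hqsum, one_mul]
    rw [this, Finset.mul_sum, ← Finset.sum_sub_distrib]
    refine Finset.sum_congr rfl fun i _ => ?_
    field_simp
    ring
  rw [eL]
  refine (sub_le_sub_right hfin _).trans_eq ?_
  field_simp
  ring
end

section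
/- Let T ≥ 1 be an integer, δ ≥ 0 a real with T·δ ≤ 1, and α a real with α ≥ T·δ. Then 1 − (1 − α − 1/2)·(1 + δ) ≥ (1/2)·(1 + δ)^T. -/
/-!
Put `x = T δ ≤ 1`. Since `α ≥ x`, the claim follows from `(1 + δ) ^ T ≤ 1 + 2 x - δ + 2 x δ`.
Bernoulli-type induction gives the quadratic bound `(1 + δ) ^ T ≤ 1 + x + x ^ 2 - x δ`
(`one_add_pow_le_quadratic`), and what remains is `0 ≤ x (1 - x) + δ (3 x - 1)`, which holds for
`0 ≤ δ ≤ x ≤ 1`.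
-/

/-- The binomial expansion of `(1 + δ) ^ k` with its terms of order at least two bounded by
`k (k - 1) δ²`, that is, by twice the second-order term. -/
lemma one_add_pow_le_quadratic (δ : ℝ) (hδ : 0 ≤ δ) (k : ℕ) (hk : (k : ℝ) * δ ≤ 1) :
    (1 + δ) ^ k ≤ 1 + k * δ + k * (k - 1) * δ ^ 2 := by
  induction k with
  | zero => simp
  | succ k ih =>
    push_cast at hk ⊢
    have hk' : (k : ℝ) * δ ≤ 1 := by linarith
    have h1 : (1 + δ) ^ k * (1 + δ) ≤ (1 + k * δ + k * (k - 1) * δ ^ 2) * (1 + δ) :=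
      mul_le_mul_of_nonneg_right (ih hk') (by linarith)
    -- The two quadratic bounds differ by `k δ² (1 - (k - 1) δ)`.
    have h2 : 0 ≤ (k : ℝ) * δ ^ 2 * (1 - (k - 1) * δ) :=
      mul_nonneg (by positivity) (by linarith)
    rw [pow_succ]
    linarith

/-- `1 − (1 − α − 1/2)·(1 + δ) ≥ (1/2)·(1 + δ)^T` whenever `δ ≥ 0`, `T·δ ≤ 1` and
`α ≥ T·δ` (with `T ≥ 1` an integer). -/
theorem stmt13 (T : ℕ) (hT : 1 ≤ T) (δ α : ℝ) (hδ : 0 ≤ δ) (hTδ : (T : ℝ) * δ ≤ 1)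
    (hα : (T : ℝ) * δ ≤ α) :
    1 - (1 - α - 1 / 2) * (1 + δ) ≥ 1 / 2 * (1 + δ) ^ T := by
  have hpow := one_add_pow_le_quadratic δ hδ T hTδ
  have hT' : (1 : ℝ) ≤ T := by exact_mod_cast hT
  have hδx : δ ≤ T * δ := le_mul_of_one_le_left hδ hT'
  have hαδ : (T : ℝ) * δ * (1 + δ) ≤ α * (1 + δ) :=
    mul_le_mul_of_nonneg_right hα (by linarith)
  have hquad : (T : ℝ) * (T - 1) * δ ^ 2 = (T * δ) ^ 2 - T * δ * δ := by ring
  rw [hquad] at hpow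
  generalize (T : ℝ) * δ = x at *
  -- With `x = T δ`, the quadratic bound reduces the claim to this inequality. It is linear in `δ`,
  -- and `0 ≤ δ ≤ x`: at `δ = 0` the left side is `x (1 - x)`, at `δ = x` it is `2 x²`.
  have key : 0 ≤ x * (1 - x) + δ * (3 * x - 1) := by
    rcases le_total (1 / 3) x with h | h
    · nlinarith [mul_nonneg hδ (by linarith : 0 ≤ 3 * x - 1),
        mul_nonneg (hδ.trans hδx) (by linarith : 0 ≤ 1 - x)]
    · nlinarith [mul_nonneg (by linarith : 0 ≤ x - δ) (by linarith : 0 ≤ 1 - 3 * x), sq_nonneg x]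
  linarith
end

section
/- Let δ ≥ 0, let α, p ∈ [0,1] with α + p ≤ 1, let T ≥ 1 be an integer, set Γ_t := (1 + δ)^t, and define θ_t := Γ_{t−1} − (1 − α − p)·Γ_t for 1 ≤ t ≤ T − 1 and θ_T := Γ_{T−1}. If 1 − (1 − α − p)·(1 + δ) ≥ p·Γ_T, then ∑_{t=1}^T θ_t ≥ Γ_T·[1 − α − p + p·∑_{t=1}^T Γ_{t−1}]. -/
/-!
Write `c = 1 - α - p` and `S = ∑ t ∈ Icc 1 T, Γ_{t-1}`. For `t < T` the weight is
`θ_t = (1 - c (1 + δ)) Γ_{t-1}`, and the last weight is the same expression plus `c Γ_T`, so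
`∑ θ_t = (1 - c (1 + δ)) S + c Γ_T` exactly. Since `S ≥ 0`, the hypothesis
`1 - c (1 + δ) ≥ p Γ_T` gives the bound.
-/

open Finset

/-- Lower bound on the sum of the Varag averaging weights `θ_t` in the strongly
convex regime, with `Γ_t = (1 + δ)^t`. -/
theorem stmt14 (δ α p : ℝ) (hδ : 0 ≤ δ) (hα0 : 0 ≤ α) (hα1 : α ≤ 1)
    (hp0 : 0 ≤ p) (hp1 : p ≤ 1) (hαp : α + p ≤ 1)
    (T : ℕ) (hT : 1 ≤ T)
    (θ : ℕ → ℝ)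
    (hθ : ∀ t, 1 ≤ t → t ≤ T - 1 →
      θ t = (1 + δ) ^ (t - 1) - (1 - α - p) * (1 + δ) ^ t)
    (hθT : θ T = (1 + δ) ^ (T - 1))
    (hkey : 1 - (1 - α - p) * (1 + δ) ≥ p * (1 + δ) ^ T) :
    ∑ t ∈ Finset.Icc 1 T, θ t
      ≥ (1 + δ) ^ T * (1 - α - p + p * ∑ t ∈ Finset.Icc 1 T, (1 + δ) ^ (t - 1)) := by
  have hsum : ∑ t ∈ Finset.Icc 1 T, θ t
      = (1 - (1 - α - p) * (1 + δ)) * ∑ t ∈ Finset.Icc 1 T, (1 + δ) ^ (t - 1)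
        + (1 - α - p) * (1 + δ) ^ T := by
    obtain ⟨n, rfl⟩ : ∃ n, T = n + 1 := ⟨T - 1, by omega⟩
    have h : ∑ t ∈ Finset.Icc 1 n, θ t
        = ∑ t ∈ Finset.Icc 1 n, (1 - (1 - α - p) * (1 + δ)) * (1 + δ) ^ (t - 1) := by
      refine Finset.sum_congr rfl fun t ht => ?_
      obtain ⟨h1, h2⟩ := Finset.mem_Icc.mp ht
      rw [hθ t h1 (by omega)]
      obtain ⟨k, rfl⟩ : ∃ k, t = k + 1 := ⟨t - 1, by omega⟩
      simp only [Nat.add_sub_cancel]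
      ring
    rw [Finset.sum_Icc_succ_top (by omega), Finset.sum_Icc_succ_top (by omega), h, hθT,
      ← Finset.mul_sum]
    simp only [Nat.add_sub_cancel]
    ring
  have hS : 0 ≤ ∑ t ∈ Finset.Icc 1 T, (1 + δ) ^ (t - 1) :=
    Finset.sum_nonneg fun t _ => by positivity
  rw [hsum]
  linarith [mul_le_mul_of_nonneg_right hkey hS]
end

section
/- Let E be a real inner product space and f : E → ℝ differentiable with L-Lipschitz continuous gradient (L > 0). Let µ, γ ≥ 0 and α, p be reals with 1 + µγ(1 − α) ≠ 0, and let x̄_{t−1}, x_{t−1}, x̃, x_t ∈ E. Define x̲ := [(1 + µγ)(1 − α − p)·x̄_{t−1} + α·x_{t−1} + (1 + µγ)·p·x̃]/(1 + µγ(1 − α)), x̄_t := (1 − α − p)·x̄_{t−1} + α·x_t + p·x̃, and x⁺ := (x_{t−1} + µγ·x̲)/(1 + µγ). Then f(x̄_t) ≤ (1 − α − p)·l_f(x̲, x̄_{t−1}) + α·l_f(x̲, x_t) + p·l_f(x̲, x̃) + (L·α²/2)·‖x_t − x⁺‖². -/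
/-!
For an `L`-smooth function, the descent lemma (`descent_lemma`) bounds `f y` by the linearization
of `f` at `x` plus `L / 2 * ‖y - x‖ ^ 2`. It is applied with `x = x̲` and `y = x̄_t`. The weights
`1 - α - p`, `α`, `p` of `x̄_t` sum to one and the linearization is affine, so the linear part is the
weighted sum of the three linearizations. The momentum updates are chosen so that
`x̄_t - x̲ = α (x_t - x⁺)` (`momentum_sub_eq`), which turns the quadratic term into the stated one.
-/


open RealInnerProductSpace

/-- The descent lemma. Along the segment `t ↦ x + t (y - x)`, the derivative of `f` is at most
`⟪f' x, y - x⟫ + t L ‖y - x‖ ^ 2`, which integrates to the quadratic upper bound. -/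
theorem descent_lemma {E : Type*} [NormedAddCommGroup E] [InnerProductSpace ℝ E] [CompleteSpace E]
    {f : E → ℝ} {f' : E → E} {L : ℝ}
    (hdiff : ∀ x, HasGradientAt f (f' x) x)
    (hlip : ∀ x y, ‖f' x - f' y‖ ≤ L * ‖x - y‖) (x y : E) :
    f y ≤ f x + ⟪f' x, y - x⟫ + L / 2 * ‖y - x‖ ^ 2 := by
  set d := y - x with hd
  have hline : ∀ t : ℝ, HasDerivAt (fun t : ℝ => x + t • d) d t := fun t => by
    simpa using ((hasDerivAt_id t).smul_const d).const_add x
  have hg : ∀ t : ℝ, HasDerivAt (fun t : ℝ => f (x + t • d)) ⟪f' (x + t • d), d⟫ t := fun t => by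
    have h := (hdiff (x + t • d)).hasFDerivAt.comp_hasDerivAt t (hline t)
    rw [InnerProductSpace.toDual_apply_apply] at h
    exact h
  have hB : ∀ t : ℝ, HasDerivAt
      (fun t : ℝ => f x + t * ⟪f' x, d⟫ + L / 2 * ‖d‖ ^ 2 * t ^ 2)
      (⟪f' x, d⟫ + L * ‖d‖ ^ 2 * t) t := fun t => by
    have h := (((hasDerivAt_id t).mul_const ⟪f' x, d⟫).const_add (f x)).add
      (((hasDerivAt_id t).pow 2).const_mul (L / 2 * ‖d‖ ^ 2))
    refine h.congr_deriv ?_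
    simp
    ring
  have hbound : ∀ t ∈ Set.Ico (0 : ℝ) 1,
      ⟪f' (x + t • d), d⟫ ≤ ⟪f' x, d⟫ + L * ‖d‖ ^ 2 * t := by
    intro t ht
    have h1 : ⟪f' (x + t • d) - f' x, d⟫ ≤ ‖f' (x + t • d) - f' x‖ * ‖d‖ :=
      real_inner_le_norm _ _
    have h2 := hlip (x + t • d) x
    rw [add_sub_cancel_left, norm_smul, Real.norm_of_nonneg ht.1] at h2
    have h3 := mul_le_mul_of_nonneg_right h2 (norm_nonneg d)
    rw [inner_sub_left] at h1
    linarith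
  have key := image_le_of_deriv_right_le_deriv_boundary (a := 0) (b := 1)
    (fun t _ => (hg t).continuousAt.continuousWithinAt)
    (fun t _ => (hg t).hasDerivWithinAt) (by simp)
    (fun t _ => (hB t).continuousAt.continuousWithinAt)
    (fun t _ => (hB t).hasDerivWithinAt) hbound (Set.right_mem_Icc.2 zero_le_one)
  simpa [hd] using key

/-- The momentum identity `x̄_t - x̲ = α (x_t - x⁺)`, with `m = μγ` and
`u = (1 - α - p) x̄_{t-1} + p x̃`. -/
theorem momentum_sub_eq {E : Type*} [AddCommGroup E] [Module ℝ E] {m α : ℝ}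
    (hm : 1 + m ≠ 0) (hne : 1 + m * (1 - α) ≠ 0) {u xtm xt xu : E}
    (hxu : xu = (1 + m * (1 - α))⁻¹ • ((1 + m) • u + α • xtm)) :
    u + α • xt - xu = α • (xt - (1 + m)⁻¹ • (xtm + m • xu)) := by
  subst hxu
  match_scalars <;> field_simp <;> ring

/-- Smoothness inequality for the Varag momentum step:
`f(x̄_t) ≤ (1−α−p)·l_f(x̲, x̄_{t−1}) + α·l_f(x̲, x_t) + p·l_f(x̲, x̃) + (Lα²/2)·‖x_t − x⁺‖²`. -/
theorem stmt19 {E : Type*} [NormedAddCommGroup E] [InnerProductSpace ℝ E] [CompleteSpace E]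
    (f : E → ℝ) (f' : E → E) (L : ℝ) (hL : 0 < L)
    (hdiff : ∀ x, HasGradientAt f (f' x) x)
    (hlip : ∀ x y, ‖f' x - f' y‖ ≤ L * ‖x - y‖)
    (μ γ α p : ℝ) (hμ : 0 ≤ μ) (hγ : 0 ≤ γ)
    (hne : 1 + μ * γ * (1 - α) ≠ 0)
    (xbtm xtm xtil xt : E)
    (xu : E) (hxu : xu = (1 + μ * γ * (1 - α))⁻¹ •
      ((1 + μ * γ) • ((1 - α - p) • xbtm) + α • xtm + ((1 + μ * γ) * p) • xtil))
    (xbt : E) (hxbt : xbt = (1 - α - p) • xbtm + α • xt + p • xtil)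
    (xplus : E) (hxplus : xplus = (1 + μ * γ)⁻¹ • (xtm + (μ * γ) • xu)) :
    f xbt ≤ (1 - α - p) * (f xu + ⟪f' xu, xbtm - xu⟫)
        + α * (f xu + ⟪f' xu, xt - xu⟫)
        + p * (f xu + ⟪f' xu, xtil - xu⟫)
        + L * α ^ 2 / 2 * ‖xt - xplus‖ ^ 2 := by
  have hm : 1 + μ * γ ≠ 0 := by positivity
  have hmom : xbt - xu = α • (xt - xplus) := by
    rw [hxplus, ← momentum_sub_eq (u := (1 - α - p) • xbtm + p • xtil) hm hne
      (by rw [hxu]; module), hxbt]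
    module
  have hlin : xbt - xu = (1 - α - p) • (xbtm - xu) + α • (xt - xu) + p • (xtil - xu) := by
    rw [hxbt]
    module
  have h := descent_lemma hdiff hlip xu xbt
  have hinner : ⟪f' xu, xbt - xu⟫ = (1 - α - p) * ⟪f' xu, xbtm - xu⟫
      + α * ⟪f' xu, xt - xu⟫ + p * ⟪f' xu, xtil - xu⟫ := by
    rw [hlin]
    simp only [inner_add_right, real_inner_smul_right]
  have hnorm : ‖xbt - xu‖ ^ 2 = α ^ 2 * ‖xt - xplus‖ ^ 2 := by
    rw [hmom, norm_smul, mul_pow, Real.norm_eq_abs, sq_abs]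
  rw [hinner, hnorm] at h
  linarith
end
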